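/- For all natural numbers m ≤ n and every ordinal α < ε₀, F^⋄_{ε₀+α}(m) ≤ F^⋄_{ε₀+α}(n). -/

import Mathlib

/-!
Both `fgh` and `slowF` obey the same recursion (`IsIterHierarchy`): a base function at `0`,
`(x + 1)`-fold iteration at successors, diagonalisation along fundamental sequences at limits.
For any such hierarchy below `ε₀` with an inflationary base, every level is inflationary, so
replacing `a` by `fundSeq a x` never increases the value at `x`; hence `H b x ≤ H a x` whenever `a`
steps down to `b` at `x`. If the base is also monotone,
monotonicity of the levels follows by induction on `a`. The critical
case is a limit, where `H (a_m) m ≤ H (a_m) n ≤ H (a_n) n`, the second inequality because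
`a_n` steps down to `a_m`.

That last fact (`stepDown_fundSeq`) is the Bachmann property of the standard fundamental sequences.
It is proved from the representation `α = ω ^ γ * (c + 1)` of a nonzero ordinal, in terms of which
`fundSeq` has simple equations, together with two closure properties of the step-down relation:
adding a multiple of `ω ^ γ` on the left of an ordinal `≤ ω ^ γ` (`stepDown_add`) and `ω ^ ·`
(`stepDown_opow`).

The general result is applied twice: to `fgh`, with base `x + 1`, and to `slowF`, with base
`slowFeps0`. The base `slowFeps0` is monotone since `Feps0Inv` is monotone and `ω_k` steps down
to `ω_j` for `j ≤ k` (`stepDown_omegaTower`).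
-/

open Ordinal
open scoped Classical

noncomputable section

/-- `omegaTower m α` is `ω_m^α`: the `m`-fold iterated `ω`-power tower on top of `α`. -/
noncomputable def omegaTower : ℕ → Ordinal.{0} → Ordinal.{0}
  | 0, α => α
  | m + 1, α => omega0 ^ (omegaTower m α)

/-- `ε₀`, the least ordinal `ε` with `ω ^ ε = ε`. -/
noncomputable def eps0 : Ordinal.{0} := Ordinal.nfp (fun a => omega0 ^ a) 0

/-- The fundamental sequence `{α}(n)` for ordinals below `ε₀`:
`{0}(n) = 0`, `{β+1}(n) = β`, and for a limit `α = β + ω^γ·(k+1)` (with `γ > 0` the least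
exponent of the Cantor normal form) we set `{α}(n) = β + ω^γ·k + ω^δ·(n+1)` if `γ = δ+1`
and `{α}(n) = β + ω^γ·k + ω^{{γ}(n)}` if `γ` is a limit.  Here `γ` is recovered as the
largest exponent with `ω^γ ∣ α`, and `β + ω^γ·k = ω^γ · pred (α / ω^γ)`. -/
noncomputable def fundSeq (α : Ordinal.{0}) (n : ℕ) : Ordinal.{0} :=
  if _h0 : α = 0 then 0
  else if hs : ∃ β, α = β + 1 then Classical.choose hs
  else
    let γ : Ordinal := sSup {c : Ordinal | omega0 ^ c ∣ α}
    if hγ : ∃ δ, γ = δ + 1 then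
      omega0 ^ γ * Ordinal.pred (α / omega0 ^ γ) +
        omega0 ^ (Classical.choose hγ) * ((n : Ordinal) + 1)
    else if hlt : γ < α then
      omega0 ^ γ * Ordinal.pred (α / omega0 ^ γ) + omega0 ^ (fundSeq γ n)
    else 0
termination_by α
decreasing_by exact hlt

/-- The step-down relation `β →_n γ`: there is a finite sequence from `β` to `γ`
each step of which descends to the `n`-th member of the fundamental sequence. -/
def stepDown (n : ℕ) (β γ : Ordinal.{0}) : Prop :=
  Relation.ReflTransGen (fun a b => fundSeq a n = b) β γ

/-- The fast-growing hierarchy `F_α` for `α < ε₀`: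
`F_0(x) = x+1`, `F_{α+1}(x) = F_α^[x+1](x)`, `F_λ(x) = F_{{λ}(x)}(x)` for limits. -/
noncomputable def fgh (α : Ordinal.{0}) : ℕ → ℕ :=
  if _h0 : α = 0 then fun x => x + 1
  else if hs : ∃ β, α = β + 1 then fun x => (fgh (Classical.choose hs))^[x + 1] x
  else fun x => if hlt : fundSeq α x < α then fgh (fundSeq α x) x else 0
termination_by α
decreasing_by
  · calc Classical.choose hs < Classical.choose hs + 1 := by
          rw [Ordinal.add_one_eq_succ]; exact Order.lt_succ _
      _ = α := (Classical.choose_spec hs).symm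
  · exact hlt

/-- `F_{ε₀}(x) := F_{ω_{x+1}}(x)`. -/
noncomputable def Feps0 (x : ℕ) : ℕ := fgh (omegaTower (x + 1) 1) x

/-- The inverse `F_{ε₀}^{-1}(x) := max({z ≤ x : F_{ε₀}(z) ≤ x} ∪ {0})`. -/
noncomputable def Feps0Inv (x : ℕ) : ℕ :=
  sSup ({z : ℕ | z ≤ x ∧ Feps0 z ≤ x} ∪ {0})

/-- The slow function `F^⋄_{ε₀}(x) := F_{ω_{F_{ε₀}^{-1}(x)+1}}(x)`. -/
noncomputable def slowFeps0 (x : ℕ) : ℕ := fgh (omegaTower (Feps0Inv x + 1) 1) x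

/-- The slow hierarchy `F^⋄_{ε₀+α}` for `α < ε₀`:
`F^⋄_{ε₀+0} = F^⋄_{ε₀}`, `F^⋄_{ε₀+α+1}(n) = (F^⋄_{ε₀+α})^[n+1](n)`, and
`F^⋄_{ε₀+λ}(n) = F^⋄_{ε₀+{λ}(n)}(n)` for limits `λ`. -/
noncomputable def slowF (α : Ordinal.{0}) : ℕ → ℕ :=
  if _h0 : α = 0 then slowFeps0
  else if hs : ∃ β, α = β + 1 then fun n => (slowF (Classical.choose hs))^[n + 1] n
  else fun n => if hlt : fundSeq α n < α then slowF (fundSeq α n) n else 0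
termination_by α
decreasing_by
  · calc Classical.choose hs < Classical.choose hs + 1 := by
          rw [Ordinal.add_one_eq_succ]; exact Order.lt_succ _
      _ = α := (Classical.choose_spec hs).symm
  · exact hlt

/-- A nonempty finite set of naturals is *large* if its cardinality is at least
its minimum. -/
def IsLargeSet (Y : Finset ℕ) : Prop := ∃ hY : Y.Nonempty, Y.min' hY ≤ Y.card

/-- The Paris–Harrington statement `PH(k, m, n, N)`: every `k`-colouring of the
`n`-element subsets of `{0, …, N-1}` admits a large homogeneous set with at least
`m` elements. -/
def PH (k m n N : ℕ) : Prop :=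
  ∀ f : Finset ℕ → Fin k,
    ∃ Y : Finset ℕ, Y ⊆ Finset.range N ∧ m ≤ Y.card ∧ IsLargeSet Y ∧
      ∀ s t : Finset ℕ, s ⊆ Y → t ⊆ Y → s.card = n → t.card = n → f s = f t

/-- `σ(n, k)`: the least `N` such that every `k`-colouring of the `n`-element subsets of
`{0, …, N-1}` admits a large homogeneous set with at least `n+1` elements. -/
noncomputable def sigmaPH (n k : ℕ) : ℕ := sInf {N | PH k (n + 1) n N}

/-! ### Equations for fundamental sequences -/

/-- In the notation of the Cantor normal form, `γ` is the least exponent of `α`; it is `0` exactly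
when `α` is a successor. -/
theorem exists_eq_opow_mul_succ (α : Ordinal.{0}) (h : α ≠ 0) :
    ∃ γ c : Ordinal.{0}, α = ω ^ γ * (c + 1) := by
  induction α using WellFoundedLT.induction with
  | ind α ih =>
    have hdm := Ordinal.div_add_mod α (ω ^ log ω α)
    have hr : α % ω ^ log ω α < ω ^ log ω α := mod_lt _ (opow_ne_zero _ omega0_ne_zero)
    obtain ⟨k, hk⟩ := lt_omega0.1 (div_opow_log_lt α one_lt_omega0)
    have hle : ω ^ log ω α ≤ α := opow_log_le_self _ h
    by_cases h0 : α % ω ^ log ω α = 0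
    · rw [h0, add_zero, hk] at hdm
      cases k with
      | zero => simp at hdm; exact absurd hdm.symm h
      | succ j => exact ⟨log ω α, j, by rw [← Nat.cast_add_one, hdm]⟩
    · obtain ⟨γ, c, hc⟩ := ih _ (hr.trans_le hle) h0
      have hγ : γ ≤ log ω α := by
        refine (opow_le_opow_iff_right one_lt_omega0).1 (le_trans ?_ hr.le)
        rw [hc]
        exact le_mul_left _ (by simp)
      obtain ⟨e, he⟩ := opow_dvd_opow ω hγ
      refine ⟨γ, e * (α / ω ^ log ω α) + c, ?_⟩
      rw [add_assoc, mul_add, ← mul_assoc, ← he, ← hc, hdm]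

/-- `γ` is the largest exponent of a power of `ω` dividing `ω ^ γ * (c + 1)`. -/
theorem sSup_opow_dvd (γ c : Ordinal.{0}) :
    sSup {d : Ordinal.{0} | ω ^ d ∣ ω ^ γ * (c + 1)} = γ := by
  have : {d : Ordinal.{0} | ω ^ d ∣ ω ^ γ * (c + 1)} = Set.Iic γ := by
    ext d
    simp only [Set.mem_ofPred_eq, Set.mem_Iic]
    refine ⟨fun hd => ?_, fun hd => (opow_dvd_opow ω hd).mul_right _⟩
    by_contra! hlt
    obtain ⟨q, hq⟩ := (opow_dvd_opow ω (Order.add_one_le_of_lt hlt)).trans hd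
    rw [opow_add, opow_one, mul_assoc] at hq
    have hq' : c + 1 = ω * q := by
      have := congrArg (· / ω ^ γ) hq
      simpa [Ordinal.mul_div_cancel _ (opow_ne_zero γ omega0_ne_zero)] using this
    have := isSuccPrelimit_iff_omega0_dvd.2 ⟨q, hq'⟩
    rw [← Order.succ_eq_add_one] at this
    exact Order.not_isSuccPrelimit_succ _ this
  rw [this, csSup_Iic]

theorem choose_succ {α β : Ordinal.{0}} (hs : ∃ β, α = β + 1) (h : α = β + 1) :
    Classical.choose hs = β := by
  have := (Classical.choose_spec hs).symm.trans h
  rw [← Order.succ_eq_add_one, ← Order.succ_eq_add_one] at this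
  exact Order.succ_injective this

theorem not_succ_opow_mul {γ : Ordinal.{0}} (c : Ordinal.{0}) (hγ : γ ≠ 0) :
    ¬ ∃ β, ω ^ γ * (c + 1) = β + 1 := by
  rintro ⟨β, hβ⟩
  have hd : ω ∣ ω ^ γ * (c + 1) := by
    refine Dvd.dvd.mul_right ?_ _
    simpa using opow_dvd_opow ω (Order.one_le_iff_pos.2 (pos_iff_ne_zero.2 hγ))
  have := isSuccPrelimit_iff_omega0_dvd.2 hd
  rw [hβ, ← Order.succ_eq_add_one] at this
  exact Order.not_isSuccPrelimit_succ _ this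

theorem opow_mul_succ_ne_zero (γ c : Ordinal.{0}) : ω ^ γ * (c + 1) ≠ 0 :=
  mul_ne_zero (opow_ne_zero _ omega0_ne_zero) (by simp)

theorem fundSeq_zero (n : ℕ) : fundSeq 0 n = 0 := by
  rw [fundSeq]; simp

theorem fundSeq_succ (β : Ordinal.{0}) (n : ℕ) : fundSeq (β + 1) n = β := by
  have hs : ∃ β', β + 1 = β' + 1 := ⟨β, rfl⟩
  rw [fundSeq, dif_neg (by simp), dif_pos hs, choose_succ hs rfl]

theorem fundSeq_opow_succ (δ c : Ordinal.{0}) (n : ℕ) :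
    fundSeq (ω ^ (δ + 1) * (c + 1)) n = ω ^ (δ + 1) * c + ω ^ δ * ((n : Ordinal) + 1) := by
  have hs : ∃ β, δ + 1 = β + 1 := ⟨δ, rfl⟩
  rw [fundSeq, dif_neg (opow_mul_succ_ne_zero _ _),
    dif_neg (not_succ_opow_mul c (by simp))]
  simp only [sSup_opow_dvd]
  rw [dif_pos hs, choose_succ hs rfl,
    Ordinal.mul_div_cancel _ (opow_ne_zero _ omega0_ne_zero), pred_add_one]

/-- The hypothesis `γ < ω ^ γ` holds for every exponent below `ε₀`. -/
theorem fundSeq_opow_limit {γ : Ordinal.{0}} (c : Ordinal.{0}) (n : ℕ) (h0 : γ ≠ 0)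
    (hs : ¬ ∃ β, γ = β + 1) (hlt : γ < ω ^ γ) :
    fundSeq (ω ^ γ * (c + 1)) n = ω ^ γ * c + ω ^ fundSeq γ n := by
  have hlt' : γ < ω ^ γ * (c + 1) := hlt.trans_le (le_mul_left _ (by simp))
  rw [fundSeq, dif_neg (opow_mul_succ_ne_zero _ _), dif_neg (not_succ_opow_mul c h0)]
  simp only [sSup_opow_dvd]
  rw [dif_neg hs, dif_pos hlt',
    Ordinal.mul_div_cancel _ (opow_ne_zero _ omega0_ne_zero), pred_add_one]

/-! ### Ordinals below `ε₀` -/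

theorem lt_opow_of_lt_eps0 {a : Ordinal.{0}} (h : a < eps0) : a < ω ^ a := by
  refine lt_of_not_ge fun hle => absurd h (not_lt.2 ?_)
  exact nfp_le_fp (isNormal_opow one_lt_omega0).monotone zero_le hle

theorem opow_lt_eps0 {a : Ordinal.{0}} (h : a < eps0) : ω ^ a < eps0 :=
  (apply_lt_nfp (isNormal_opow one_lt_omega0)).2 h

theorem exponent_le (γ c : Ordinal.{0}) : γ ≤ ω ^ γ * (c + 1) :=
  (right_le_opow γ one_lt_omega0).trans (le_mul_left _ (by simp))

theorem omegaTower_lt_eps0 (k : ℕ) : omegaTower k 1 < eps0 := by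
  induction k with
  | zero =>
    have h : (0 : Ordinal.{0}) < eps0 := lt_nfp_iff.2 ⟨1, by simp⟩
    simpa [omegaTower] using opow_lt_eps0 h
  | succ k ih => exact opow_lt_eps0 ih

theorem fundSeq_lt {a : Ordinal.{0}} (n : ℕ) (ha : a < eps0) (h0 : a ≠ 0) :
    fundSeq a n < a := by
  induction a using WellFoundedLT.induction with
  | ind a ih =>
    obtain ⟨γ, c, rfl⟩ := exists_eq_opow_mul_succ a h0
    have hγ : γ < eps0 := (exponent_le γ c).trans_lt ha
    have hlt := lt_opow_of_lt_eps0 hγ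
    by_cases hγ0 : γ = 0
    · subst hγ0
      simp only [opow_zero, one_mul, fundSeq_succ]
      exact lt_add_one c
    by_cases hs : ∃ β, γ = β + 1
    · obtain ⟨δ, rfl⟩ := hs
      rw [fundSeq_opow_succ, mul_add_one (ω ^ (δ + 1))]
      refine (add_lt_add_iff_left _).2 ?_
      have := opow_mul_lt_opow (natCast_lt_omega0 (n + 1)) (lt_add_one δ)
      simpa using this
    · rw [fundSeq_opow_limit c n hγ0 hs hlt, mul_add_one (ω ^ γ)]
      refine (add_lt_add_iff_left _).2 ((opow_lt_opow_iff_right one_lt_omega0).2 ?_)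
      exact ih γ (hlt.trans_le (le_mul_left _ (by simp))) hγ hγ0

theorem fundSeq_le {a : Ordinal.{0}} (n : ℕ) (ha : a < eps0) : fundSeq a n ≤ a := by
  by_cases h0 : a = 0
  · rw [h0, fundSeq_zero]
  · exact (fundSeq_lt n ha h0).le

/-! ### The step-down relation -/

theorem stepDown_one (n : ℕ) (a : Ordinal.{0}) : stepDown n a (fundSeq a n) :=
  Relation.ReflTransGen.single rfl

theorem stepDown_zero (n : ℕ) {a : Ordinal.{0}} (ha : a < eps0) : stepDown n a 0 := by
  induction a using WellFoundedLT.induction with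
  | ind a ih =>
    by_cases h0 : a = 0
    · rw [h0]; exact Relation.ReflTransGen.refl
    · have := fundSeq_lt n ha h0
      exact (stepDown_one n a).trans (ih _ this (this.trans ha))

/-- Fundamental sequences act on the last term of the Cantor normal form only. -/
theorem fundSeq_add (n : ℕ) {a γ : Ordinal.{0}} (b : Ordinal.{0}) (ha : a < eps0)
    (h0 : a ≠ 0) (hle : a ≤ ω ^ γ) :
    fundSeq (ω ^ γ * b + a) n = ω ^ γ * b + fundSeq a n := by
  obtain ⟨γ', c, rfl⟩ := exists_eq_opow_mul_succ a h0
  have hγ' : γ' ≤ γ :=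
    (opow_le_opow_iff_right one_lt_omega0).1 ((le_mul_left _ (by simp)).trans hle)
  obtain ⟨e, he⟩ := opow_dvd_opow ω hγ'
  rw [he, mul_assoc, ← mul_add, ← add_assoc]
  have hγe : γ' < eps0 := (exponent_le γ' c).trans_lt ha
  by_cases hγ0 : γ' = 0
  · subst hγ0
    simp only [opow_zero, one_mul, fundSeq_succ]
  by_cases hs : ∃ β, γ' = β + 1
  · obtain ⟨δ, rfl⟩ := hs
    rw [fundSeq_opow_succ, fundSeq_opow_succ, mul_add, add_assoc]
  · rw [fundSeq_opow_limit _ n hγ0 hs (lt_opow_of_lt_eps0 hγe),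
      fundSeq_opow_limit _ n hγ0 hs (lt_opow_of_lt_eps0 hγe), mul_add, add_assoc]

theorem stepDown_add (n : ℕ) {a a' γ : Ordinal.{0}} (b : Ordinal.{0}) (ha : a < eps0)
    (hle : a ≤ ω ^ γ) (h : stepDown n a a') :
    stepDown n (ω ^ γ * b + a) (ω ^ γ * b + a') := by
  induction h using Relation.ReflTransGen.head_induction_on with
  | refl => exact Relation.ReflTransGen.refl
  | head hac hcb ih =>
    rename_i x y
    subst hac
    have ih' := ih ((fundSeq_le n ha).trans_lt ha) ((fundSeq_le n ha).trans hle)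
    by_cases h0 : x = 0
    · subst h0; rwa [fundSeq_zero] at ih'
    · exact Relation.ReflTransGen.head (fundSeq_add n b ha h0 hle) ih'

theorem stepDown_mul_nat (n : ℕ) {δ : Ordinal.{0}} (hδ : δ < eps0) {j k : ℕ} (hjk : j ≤ k) :
    stepDown n (ω ^ δ * (k : Ordinal.{0})) (ω ^ δ * (j : Ordinal.{0})) := by
  induction k, hjk using Nat.le_induction with
  | base => exact Relation.ReflTransGen.refl
  | succ k _ ih =>
    refine Relation.ReflTransGen.trans ?_ ih
    have := stepDown_add n (k : Ordinal.{0}) (opow_lt_eps0 hδ) le_rfl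
      (stepDown_zero n (opow_lt_eps0 hδ))
    rwa [add_zero, ← mul_add_one (ω ^ δ), ← Nat.cast_add_one] at this

theorem fundSeq_omega_opow_succ (n : ℕ) (δ : Ordinal.{0}) :
    fundSeq (ω ^ (δ + 1)) n = ω ^ δ * ((n + 1 : ℕ) : Ordinal.{0}) := by
  have := fundSeq_opow_succ δ 0 n
  simpa using this

theorem stepDown_opow_fundSeq (n : ℕ) {a : Ordinal.{0}} (ha : a < eps0) :
    stepDown n (ω ^ a) (ω ^ fundSeq a n) := by
  by_cases h0 : a = 0
  · subst h0; rw [fundSeq_zero]; exact Relation.ReflTransGen.refl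
  by_cases hs : ∃ β, a = β + 1
  · obtain ⟨δ, rfl⟩ := hs
    have hδ : δ < eps0 := (lt_add_one δ).trans ha
    rw [fundSeq_succ]
    refine Relation.ReflTransGen.head (fundSeq_omega_opow_succ n δ) ?_
    have := stepDown_mul_nat n hδ (show 1 ≤ n + 1 by omega)
    rwa [Nat.cast_one, mul_one] at this
  · have := fundSeq_opow_limit 0 n h0 hs (lt_opow_of_lt_eps0 ha)
    simp only [zero_add, mul_one, mul_zero] at this
    rw [← this]
    exact stepDown_one n _

theorem stepDown_opow (n : ℕ) {a b : Ordinal.{0}} (ha : a < eps0) (h : stepDown n a b) :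
    stepDown n (ω ^ a) (ω ^ b) := by
  induction h using Relation.ReflTransGen.head_induction_on with
  | refl => exact Relation.ReflTransGen.refl
  | head hac _ ih =>
    subst hac
    exact (stepDown_opow_fundSeq n ha).trans (ih ((fundSeq_le n ha).trans_lt ha))

/-- The Bachmann property: later members of a fundamental sequence step down to earlier ones,
for every argument `k` of the step-down relation. -/
theorem stepDown_fundSeq (k : ℕ) {m n : ℕ} (hmn : m ≤ n) {a : Ordinal.{0}} (ha : a < eps0) :
    stepDown k (fundSeq a n) (fundSeq a m) := by
  induction a using WellFoundedLT.induction with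
  | ind a ih =>
    by_cases h0 : a = 0
    · subst h0; rw [fundSeq_zero, fundSeq_zero]; exact Relation.ReflTransGen.refl
    obtain ⟨γ, c, rfl⟩ := exists_eq_opow_mul_succ a h0
    have hγ : γ < eps0 := (exponent_le γ c).trans_lt ha
    have hlt := lt_opow_of_lt_eps0 hγ
    by_cases hγ0 : γ = 0
    · subst hγ0
      simp only [opow_zero, one_mul, fundSeq_succ]
      exact Relation.ReflTransGen.refl
    by_cases hs : ∃ β, γ = β + 1
    · obtain ⟨δ, rfl⟩ := hs
      have hδ : δ < δ + 1 := lt_add_one δ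
      have hlt' := (opow_mul_lt_opow (natCast_lt_omega0 (n + 1)) hδ).le
      have := stepDown_add k c (hlt'.trans_lt (opow_lt_eps0 hγ)) hlt'
        (stepDown_mul_nat k (hδ.trans hγ) (Nat.succ_le_succ hmn))
      rw [fundSeq_opow_succ, fundSeq_opow_succ]
      simpa using this
    · rw [fundSeq_opow_limit c n hγ0 hs hlt, fundSeq_opow_limit c m hγ0 hs hlt]
      have hf : fundSeq γ n < eps0 := (fundSeq_le n hγ).trans_lt hγ
      exact stepDown_add k c (opow_lt_eps0 hf)
        (opow_le_opow_right omega0_pos (fundSeq_le n hγ))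
        (stepDown_opow k hf (ih γ (hlt.trans_le (le_mul_left _ (by simp))) hγ))

theorem stepDown_omegaTower_succ (n k : ℕ) :
    stepDown n (omegaTower (k + 1) 1) (omegaTower k 1) := by
  induction k with
  | zero =>
    -- `ω = ω ^ 1` steps down to `ω ^ 0 = 1` because `1` steps down to `0`
    have := stepDown_opow n (omegaTower_lt_eps0 0) (stepDown_zero n (omegaTower_lt_eps0 0))
    rw [opow_zero] at this
    exact this
  | succ k ih => exact stepDown_opow n (omegaTower_lt_eps0 (k + 1)) ih

theorem stepDown_omegaTower (n : ℕ) {j k : ℕ} (hjk : j ≤ k) :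
    stepDown n (omegaTower k 1) (omegaTower j 1) := by
  induction k, hjk using Nat.le_induction with
  | base => exact Relation.ReflTransGen.refl
  | succ k _ ih =>
    exact (stepDown_omegaTower_succ n k).trans ih

/-! ### Iteration hierarchies below `ε₀` -/

/-- `H` satisfies the recursion equations of the fast-growing hierarchy at the successors and
limits below `ε₀`; the base function `H 0` is arbitrary. -/
structure IsIterHierarchy (H : Ordinal.{0} → ℕ → ℕ) : Prop where
  succ : ∀ β x, H (β + 1) x = (H β)^[x + 1] x
  limit : ∀ a < eps0, a ≠ 0 → (¬ ∃ β, a = β + 1) → ∀ x, H a x = H (fundSeq a x) x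

namespace IsIterHierarchy

variable {H : Ordinal.{0} → ℕ → ℕ}

theorem le_apply (hH : IsIterHierarchy H) (h0 : ∀ x, x ≤ H 0 x) {a : Ordinal.{0}}
    (ha : a < eps0) (x : ℕ) : x ≤ H a x := by
  induction a using WellFoundedLT.induction generalizing x with
  | ind a ih =>
    by_cases ha0 : a = 0
    · rw [ha0]; exact h0 x
    by_cases hs : ∃ β, a = β + 1
    · obtain ⟨β, rfl⟩ := hs
      have hβ : β < β + 1 := lt_add_one β
      rw [hH.succ]
      exact Function.id_le_iterate_of_id_le (fun y => ih β hβ (hβ.trans ha) y) _ x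
    · rw [hH.limit a ha ha0 hs]
      have := fundSeq_lt x ha ha0
      exact ih _ this (this.trans ha) x

theorem le_of_stepDown (hH : IsIterHierarchy H) (h0 : ∀ x, x ≤ H 0 x) {a b : Ordinal.{0}}
    (ha : a < eps0) {x : ℕ} (h : stepDown x a b) : H b x ≤ H a x := by
  induction h using Relation.ReflTransGen.head_induction_on with
  | refl => exact le_rfl
  | head hac hcb ih =>
    rename_i a y
    subst hac
    refine (ih ((fundSeq_le x ha).trans_lt ha)).trans ?_
    by_cases ha0 : a = 0
    · rw [ha0, fundSeq_zero]
    by_cases hs : ∃ β, a = β + 1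
    · obtain ⟨β, rfl⟩ := hs
      have hβ : β < eps0 := (lt_add_one β).trans ha
      rw [hH.succ, fundSeq_succ, Function.iterate_succ_apply]
      exact Function.id_le_iterate_of_id_le (fun y => hH.le_apply h0 hβ y) _ _
    · rw [hH.limit a ha ha0 hs]

theorem monotone (hH : IsIterHierarchy H) (h0 : ∀ x, x ≤ H 0 x) (hm : Monotone (H 0))
    {a : Ordinal.{0}} (ha : a < eps0) : Monotone (H a) := by
  induction a using WellFoundedLT.induction with
  | ind a ih =>
    intro m n hmn
    by_cases ha0 : a = 0
    · rw [ha0]; exact hm hmn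
    by_cases hs : ∃ β, a = β + 1
    · obtain ⟨β, rfl⟩ := hs
      have hβ : β < β + 1 := lt_add_one β
      have hβe := hβ.trans ha
      rw [hH.succ, hH.succ]
      calc (H β)^[m + 1] m ≤ (H β)^[m + 1] n := (ih β hβ hβe).iterate _ hmn
        _ ≤ (H β)^[n + 1] n := Function.monotone_iterate_of_id_le
            (fun y => hH.le_apply h0 hβe y) (Nat.succ_le_succ hmn) n
    · have hlt := fundSeq_lt m ha ha0
      rw [hH.limit a ha ha0 hs, hH.limit a ha ha0 hs]
      calc H (fundSeq a m) m ≤ H (fundSeq a m) n := ih _ hlt (hlt.trans ha) hmn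
        _ ≤ H (fundSeq a n) n := hH.le_of_stepDown h0 ((fundSeq_le n ha).trans_lt ha)
            (stepDown_fundSeq n hmn ha)

end IsIterHierarchy

/-! ### The two hierarchies -/

theorem fgh_zero (x : ℕ) : fgh 0 x = x + 1 := by
  rw [fgh]; simp

theorem isIterHierarchy_fgh : IsIterHierarchy fgh where
  succ β x := by
    have hs : ∃ β', β + 1 = β' + 1 := ⟨β, rfl⟩
    rw [fgh, dif_neg (by simp), dif_pos hs, choose_succ hs rfl]
  limit a ha h0 hs x := by
    rw [fgh, dif_neg h0, dif_neg hs]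
    exact dif_pos (fundSeq_lt x ha h0)

theorem slowF_zero : slowF 0 = slowFeps0 := by
  rw [slowF]; simp

theorem isIterHierarchy_slowF : IsIterHierarchy slowF where
  succ β x := by
    have hs : ∃ β', β + 1 = β' + 1 := ⟨β, rfl⟩
    rw [slowF, dif_neg (by simp), dif_pos hs, choose_succ hs rfl]
  limit a ha h0 hs x := by
    rw [slowF, dif_neg h0, dif_neg hs]
    exact dif_pos (fundSeq_lt x ha h0)

theorem Feps0Inv_mono : Monotone Feps0Inv := by
  intro m n hmn
  refine csSup_le_csSup ⟨n, ?_⟩ ⟨0, by simp⟩ ?_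
  · rintro z (⟨hz, _⟩ | hz)
    · exact hz
    · simp [Set.mem_singleton_iff.1 hz]
  · rintro z (⟨hz, hz'⟩ | hz)
    · exact Or.inl ⟨hz.trans hmn, hz'.trans hmn⟩
    · exact Or.inr hz

theorem fgh_zero_le (x : ℕ) : x ≤ fgh 0 x := by
  rw [fgh_zero]; exact Nat.le_succ x

theorem le_slowFeps0 (x : ℕ) : x ≤ slowFeps0 x :=
  isIterHierarchy_fgh.le_apply fgh_zero_le (omegaTower_lt_eps0 _) x

theorem slowFeps0_mono : Monotone slowFeps0 := by
  intro m n hmn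
  have h0 : Monotone (fgh 0) := fun x y hxy => by
    rw [fgh_zero, fgh_zero]; exact Nat.succ_le_succ hxy
  calc fgh (omegaTower (Feps0Inv m + 1) 1) m
      ≤ fgh (omegaTower (Feps0Inv m + 1) 1) n :=
        isIterHierarchy_fgh.monotone fgh_zero_le h0 (omegaTower_lt_eps0 _) hmn
    _ ≤ fgh (omegaTower (Feps0Inv n + 1) 1) n :=
        isIterHierarchy_fgh.le_of_stepDown fgh_zero_le (omegaTower_lt_eps0 _)
          (stepDown_omegaTower n (Nat.succ_le_succ (Feps0Inv_mono hmn)))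

/-- For all naturals `m ≤ n` and every ordinal `α < ε₀`, `F^⋄_{ε₀+α}(m) ≤ F^⋄_{ε₀+α}(n)`. -/
theorem stmt3 : ∀ m n : ℕ, m ≤ n → ∀ α : Ordinal.{0}, α < eps0 → slowF α m ≤ slowF α n := by
  intro m n hmn α hα
  refine isIterHierarchy_slowF.monotone (fun x => ?_) ?_ hα hmn
  · rw [slowF_zero]; exact le_slowFeps0 x
  · rw [slowF_zero]; exact slowFeps0_mono

end
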